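/- Let S : ℝ × ℝ → ℝ be infinitely differentiable with S_{xy}(x,y) > 0 everywhere, and suppose S satisfies the Samuelson area ratio condition A(x,y,ε,δ)·A(x,y,−ε,−δ) = A(x,y,ε,−δ)·A(x,y,−ε,δ) for all x, y, ε, δ ∈ ℝ, where A(x,y,ε,δ) := S(x+ε, y+δ) − S(x+ε, y) − S(x, y+δ) + S(x,y). Then there exist strictly increasing infinitely differentiable functions F, G : ℝ → ℝ such that the injective smooth map Φ(x,y) := (F(x), G(y)) satisfies det DΦ(x,y) = S_{xy}(x,y) at every point; that is, Φ pulls back the standard area form on its image to the area form S_{xy}(x,y) dx∧dy. -/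

import Mathlib

/-!
Write `m = S_{xy}`. The area condition forces `log m` to be a sum of a function of `x` and a function
of `y`, and then `m` is the Jacobian of a product map.

The infinitesimal form comes from a one-variable fact used twice (`deriv_cross_eq`): if
`(p(a+t) - p(a)) (q(a-t) - q(a))` is symmetric in `p` and `q` for all `t`, then its third
`t`-derivative at `0` gives `p' q'' = p'' q'` at `a`.

* Applied in `x` to `p = S(·, y+δ) - S(·, y)` and `q = S(·, y-δ) - S(·, y)`, it turns the area
  condition into the same type of identity in `δ` for the functions `S_x(x, ·)` and `S_{xx}(x, ·)`.
* Applied again in `y`, it gives `m m_{xy} = m_x m_y`, i.e. `∂_y (m_x / m) = 0`.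

Integrating twice yields `m(x,y) m(0,0) = m(x,0) m(0,y)` (`mul_eq_of_cross`). The map is then
`F(x) = S_y(x, 0)` and `G(y) = S_x(0, y) / m(0,0)`, whose derivatives are `m(x,0)` and
`m(0,y) / m(0,0)`.
-/

/-- Partial derivative in the first (x) variable. -/
noncomputable def pdx (F : ℝ × ℝ → ℝ) : ℝ × ℝ → ℝ :=
  fun p => deriv (fun a => F (a, p.2)) p.1

/-- Partial derivative in the second (y) variable. -/
noncomputable def pdy (F : ℝ × ℝ → ℝ) : ℝ × ℝ → ℝ :=
  fun p => deriv (fun b => F (p.1, b)) p.2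

/-- The mixed second partial derivative `S_{xy} = ∂²S/∂x∂y`. -/
noncomputable def Sxy (S : ℝ × ℝ → ℝ) (x y : ℝ) : ℝ :=
  pdx (pdy S) (x, y)

/-- The second mixed difference of `S` based at `(x,y)` with increments `(ε,δ)`. -/
def mixedDiff (S : ℝ × ℝ → ℝ) (x y ε δ : ℝ) : ℝ :=
  S (x + ε, y + δ) - S (x + ε, y) - S (x, y + δ) + S (x, y)

theorem pdx_hasDerivAt {F : ℝ × ℝ → ℝ} (hF : ContDiff ℝ (⊤ : ℕ∞) F) (x y : ℝ) :
    HasDerivAt (fun a => F (a, y)) (pdx F (x, y)) x := by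
  have h : Differentiable ℝ (fun a : ℝ => F (a, y)) :=
    (hF.comp (contDiff_id.prodMk contDiff_const)).differentiable (by simp)
  exact (h x).hasDerivAt

theorem pdy_hasDerivAt {F : ℝ × ℝ → ℝ} (hF : ContDiff ℝ (⊤ : ℕ∞) F) (x y : ℝ) :
    HasDerivAt (fun b => F (x, b)) (pdy F (x, y)) y := by
  have h : Differentiable ℝ (fun b : ℝ => F (x, b)) :=
    (hF.comp (contDiff_const.prodMk contDiff_id)).differentiable (by simp)
  exact (h y).hasDerivAt

theorem pdx_eq_fderiv {F : ℝ × ℝ → ℝ} (hF : ContDiff ℝ (⊤ : ℕ∞) F) :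
    pdx F = fun p => fderiv ℝ F p (1, 0) := by
  funext p
  have h := (hF.differentiable (by simp) p).hasFDerivAt
  have h2 : HasDerivAt (fun a : ℝ => (a, p.2)) ((1 : ℝ), (0 : ℝ)) p.1 :=
    (hasDerivAt_id p.1).prodMk (hasDerivAt_const p.1 p.2)
  exact (h.comp_hasDerivAt p.1 h2).deriv

theorem pdy_eq_fderiv {F : ℝ × ℝ → ℝ} (hF : ContDiff ℝ (⊤ : ℕ∞) F) :
    pdy F = fun p => fderiv ℝ F p (0, 1) := by
  funext p
  have h := (hF.differentiable (by simp) p).hasFDerivAt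
  have h2 : HasDerivAt (fun b : ℝ => (p.1, b)) ((0 : ℝ), (1 : ℝ)) p.2 :=
    (hasDerivAt_const p.2 p.1).prodMk (hasDerivAt_id p.2)
  exact (h.comp_hasDerivAt p.2 h2).deriv

theorem contDiff_fderiv_apply {F : ℝ × ℝ → ℝ} (hF : ContDiff ℝ (⊤ : ℕ∞) F) (v : ℝ × ℝ) :
    ContDiff ℝ (⊤ : ℕ∞) (fun p => fderiv ℝ F p v) :=
  (hF.fderiv_right (m := ((⊤ : ℕ∞) : WithTop ℕ∞)) (by simp)).clm_apply contDiff_const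

theorem contDiff_pdx {F : ℝ × ℝ → ℝ} (hF : ContDiff ℝ (⊤ : ℕ∞) F) :
    ContDiff ℝ (⊤ : ℕ∞) (pdx F) := by
  rw [pdx_eq_fderiv hF]; exact contDiff_fderiv_apply hF _

theorem contDiff_pdy {F : ℝ × ℝ → ℝ} (hF : ContDiff ℝ (⊤ : ℕ∞) F) :
    ContDiff ℝ (⊤ : ℕ∞) (pdy F) := by
  rw [pdy_eq_fderiv hF]; exact contDiff_fderiv_apply hF _

theorem pdy_pdx_comm {F : ℝ × ℝ → ℝ} (hF : ContDiff ℝ (⊤ : ℕ∞) F) :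
    pdy (pdx F) = pdx (pdy F) := by
  rw [pdy_eq_fderiv (contDiff_pdx hF), pdx_eq_fderiv (contDiff_pdy hF), pdx_eq_fderiv hF,
    pdy_eq_fderiv hF]
  funext p
  have hd : DifferentiableAt ℝ (fderiv ℝ F) p :=
    (hF.fderiv_right (m := ((⊤ : ℕ∞) : WithTop ℕ∞)) (by simp)).differentiable (by simp) p
  have hsymm : IsSymmSndFDerivAt ℝ F p := hF.contDiffAt.isSymmSndFDerivAt (by
    rw [minSmoothness_of_isRCLikeNormedField]; exact WithTop.coe_le_coe.2 (le_top : (2 : ℕ∞) ≤ ⊤))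
  have key : ∀ v w : ℝ × ℝ,
      fderiv ℝ (fun p => fderiv ℝ F p v) p w = fderiv ℝ (fderiv ℝ F) p w v := by
    intro v w
    rw [fderiv_clm_apply hd (differentiableAt_const v)]
    simp
  rw [key, key]
  exact hsymm _ _

/-- The third derivative at `t = 0` of
`(p(a+t) - p(a)) (q(a-t) - q(a)) - (q(a+t) - q(a)) (p(a-t) - p(a))`
is `6 (p' q'' - p'' q')(a)`, the remaining terms carrying a factor that vanishes at `t = 0`. -/
theorem deriv_cross_eq {p p1 p2 p3 q q1 q2 q3 : ℝ → ℝ} (a : ℝ)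
    (hp : ∀ t, HasDerivAt p (p1 t) t) (hp1 : ∀ t, HasDerivAt p1 (p2 t) t)
    (hp2 : ∀ t, HasDerivAt p2 (p3 t) t)
    (hq : ∀ t, HasDerivAt q (q1 t) t) (hq1 : ∀ t, HasDerivAt q1 (q2 t) t)
    (hq2 : ∀ t, HasDerivAt q2 (q3 t) t)
    (h : ∀ t, (p (a + t) - p a) * (q (a - t) - q a) = (q (a + t) - q a) * (p (a - t) - p a)) :
    p1 a * q2 a = p2 a * q1 a := by
  have hadd : ∀ {f f' : ℝ → ℝ}, (∀ t, HasDerivAt f (f' t) t) →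
      ∀ t, HasDerivAt (fun s => f (a + s)) (f' (a + t)) t :=
    fun hf t => HasDerivAt.comp_const_add a t (hf (a + t))
  have hsub : ∀ {f f' : ℝ → ℝ}, (∀ t, HasDerivAt f (f' t) t) →
      ∀ t, HasDerivAt (fun s => f (a - s)) (-f' (a - t)) t :=
    fun hf t => HasDerivAt.comp_const_sub a t (hf (a - t))
  have hzero : ∀ {f f' : ℝ → ℝ}, (∀ t, f t = 0) → (∀ t, HasDerivAt f (f' t) t) →
      ∀ t, f' t = 0 := by
    intro f f' h0 hf t
    have hf0 : f = fun _ => 0 := funext h0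
    have := hf t
    rw [hf0] at this
    exact this.unique (hasDerivAt_const t 0)
  have h0 : ∀ t, (p (a + t) - p a) * (q (a - t) - q a)
      - (q (a + t) - q a) * (p (a - t) - p a) = 0 := fun t => sub_eq_zero.2 (h t)
  have h1 := hzero h0 fun t =>
    ((((hadd hp t).sub_const (p a)).mul ((hsub hq t).sub_const (q a))).sub
      (((hadd hq t).sub_const (q a)).mul ((hsub hp t).sub_const (p a))))
  have h2 := hzero h1 fun t =>
    ((((hadd hp1 t).mul ((hsub hq t).sub_const (q a))).add
        (((hadd hp t).sub_const (p a)).mul (hsub hq1 t).neg)).sub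
      (((hadd hq1 t).mul ((hsub hp t).sub_const (p a))).add
        (((hadd hq t).sub_const (q a)).mul (hsub hp1 t).neg)))
  have h3 := hzero h2 fun t =>
    (((((hadd hp2 t).mul ((hsub hq t).sub_const (q a))).add
          ((hadd hp1 t).mul (hsub hq1 t).neg)).add
        (((hadd hp1 t).mul (hsub hq1 t).neg).add
          (((hadd hp t).sub_const (p a)).mul (hsub hq2 t).neg.neg))).sub
      ((((hadd hq2 t).mul ((hsub hp t).sub_const (p a))).add
          ((hadd hq1 t).mul (hsub hp1 t).neg)).add
        (((hadd hq1 t).mul (hsub hp1 t).neg).add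
          (((hadd hq t).sub_const (q a)).mul (hsub hp2 t).neg.neg))))
  have h4 := h3 0
  simp only [Pi.neg_apply, add_zero, sub_zero, sub_self, mul_zero, zero_mul, zero_add] at h4
  linarith

/-- A positive smooth `m` with `m m_{xy} = m_x m_y` splits as a product: `m_x / m` does not depend on
`y`, hence `m(x,y) / m(x,0)` does not depend on `x`. -/
theorem mul_eq_of_cross {m : ℝ × ℝ → ℝ} (hm : ContDiff ℝ (⊤ : ℕ∞) m) (hpos : ∀ x y, 0 < m (x, y))
    (h : ∀ x y, m (x, y) * pdy (pdx m) (x, y) = pdy m (x, y) * pdx m (x, y)) (x y : ℝ) :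
    m (x, y) * m (0, 0) = m (x, 0) * m (0, y) := by
  have const : ∀ {f : ℝ → ℝ}, (∀ t, HasDerivAt f 0 t) → ∀ s t, f s = f t := fun hf =>
    is_const_of_deriv_eq_zero (fun t => (hf t).differentiableAt) fun t => (hf t).deriv
  have h1 : ∀ x y, pdx m (x, y) * m (x, 0) = pdx m (x, 0) * m (x, y) := by
    intro x y
    have hc : pdx m (x, y) / m (x, y) = pdx m (x, 0) / m (x, 0) := by
      refine const (f := fun b => pdx m (x, b) / m (x, b)) (fun b => ?_) y 0
      refine ((pdy_hasDerivAt (contDiff_pdx hm) x b).div (pdy_hasDerivAt hm x b)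
        (hpos x b).ne').congr_deriv ?_
      rw [div_eq_zero_iff]
      left
      linarith [h x b]
    exact (div_eq_div_iff (hpos x y).ne' (hpos x 0).ne').1 hc
  have hc : m (x, y) / m (x, 0) = m (0, y) / m (0, 0) := by
    refine const (f := fun a => m (a, y) / m (a, 0)) (fun a => ?_) x 0
    refine ((pdx_hasDerivAt hm a y).div (pdx_hasDerivAt hm a 0) (hpos a 0).ne').congr_deriv ?_
    rw [div_eq_zero_iff]
    left
    linarith [h1 a y]
  linarith [(div_eq_div_iff (hpos x 0).ne' (hpos 0 0).ne').1 hc]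

/-- The infinitesimal form `m m_{xy} = m_x m_y` of the area condition, for `m = S_{xy}`. -/
theorem cross_of_area {S : ℝ × ℝ → ℝ} (hS : ContDiff ℝ (⊤ : ℕ∞) S)
    (harea : ∀ x y ε δ : ℝ,
      mixedDiff S x y ε δ * mixedDiff S x y (-ε) (-δ) =
        mixedDiff S x y ε (-δ) * mixedDiff S x y (-ε) δ) (x y : ℝ) :
    pdx (pdy S) (x, y) * pdy (pdx (pdx (pdy S))) (x, y) =
      pdy (pdx (pdy S)) (x, y) * pdx (pdx (pdy S)) (x, y) := by
  have hX := contDiff_pdx hS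
  have hXX := contDiff_pdx hX
  have e1 : pdy (pdx S) = pdx (pdy S) := pdy_pdx_comm hS
  have e2 : pdy (pdx (pdx S)) = pdx (pdx (pdy S)) := by rw [pdy_pdx_comm hX, e1]
  have hx : ∀ δ, (pdx S (x, y + δ) - pdx S (x, y)) *
        (pdx (pdx S) (x, y - δ) - pdx (pdx S) (x, y)) =
      (pdx (pdx S) (x, y + δ) - pdx (pdx S) (x, y)) * (pdx S (x, y - δ) - pdx S (x, y)) := by
    intro δ
    have d : ∀ {F : ℝ × ℝ → ℝ}, ContDiff ℝ (⊤ : ℕ∞) F → ∀ b a,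
        HasDerivAt (fun a => F (a, b) - F (a, y)) (pdx F (a, b) - pdx F (a, y)) a :=
      fun hF b a => (pdx_hasDerivAt hF a b).sub (pdx_hasDerivAt hF a y)
    refine deriv_cross_eq x (d hS (y + δ)) (d hX (y + δ)) (d hXX (y + δ)) (d hS (y - δ))
      (d hX (y - δ)) (d hXX (y - δ)) fun ε => ?_
    have := harea x y ε δ
    simp only [mixedDiff, ← sub_eq_add_neg] at this
    linarith
  have := deriv_cross_eq y (fun b => pdy_hasDerivAt hX x b)
    (fun b => pdy_hasDerivAt (contDiff_pdy hX) x b)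
    (fun b => pdy_hasDerivAt (contDiff_pdy (contDiff_pdy hX)) x b)
    (fun b => pdy_hasDerivAt hXX x b)
    (fun b => pdy_hasDerivAt (contDiff_pdy hXX) x b)
    (fun b => pdy_hasDerivAt (contDiff_pdy (contDiff_pdy hXX)) x b) hx
  rwa [e2, e1] at this

theorem det_fderiv_prod {F G : ℝ → ℝ} {f g x y : ℝ} (hF : HasDerivAt F f x)
    (hG : HasDerivAt G g y) :
    (fderiv ℝ (fun p : ℝ × ℝ => (F p.1, G p.2)) (x, y)).det = f * g := by
  have h : HasFDerivAt (fun p : ℝ × ℝ => (F p.1, G p.2)) _ (x, y) :=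
    HasFDerivAt.prodMap (x, y) hF.hasFDerivAt hG.hasFDerivAt
  rw [h.fderiv, ContinuousLinearMap.det, ContinuousLinearMap.coe_prodMap, LinearMap.det_prodMap,
    LinearMap.det_ring, LinearMap.det_ring]
  simp

/-- If `S` is smooth with everywhere positive `S_{xy}` and satisfies the Samuelson
area ratio condition, then there are strictly increasing smooth `F, G : ℝ → ℝ` such
that the (injective, smooth) map `Φ(x,y) = (F(x), G(y))` has Jacobian determinant
`S_{xy}(x,y)` at every point. -/
theorem area_condition_gives_trivializing_map
    (S : ℝ × ℝ → ℝ) (hS : ContDiff ℝ (⊤ : ℕ∞) S)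
    (hpos : ∀ x y : ℝ, 0 < Sxy S x y)
    (harea : ∀ x y ε δ : ℝ,
      mixedDiff S x y ε δ * mixedDiff S x y (-ε) (-δ) =
        mixedDiff S x y ε (-δ) * mixedDiff S x y (-ε) δ) :
    ∃ F G : ℝ → ℝ, ContDiff ℝ (⊤ : ℕ∞) F ∧ ContDiff ℝ (⊤ : ℕ∞) G ∧
      StrictMono F ∧ StrictMono G ∧
      Function.Injective (fun p : ℝ × ℝ => (F p.1, G p.2)) ∧
      ContDiff ℝ (⊤ : ℕ∞) (fun p : ℝ × ℝ => (F p.1, G p.2)) ∧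
      ∀ x y : ℝ,
        (fderiv ℝ (fun p : ℝ × ℝ => (F p.1, G p.2)) (x, y)).det = Sxy S x y := by
  have hm : ContDiff ℝ (⊤ : ℕ∞) (pdx (pdy S)) := contDiff_pdx (contDiff_pdy hS)
  have hpos' : ∀ x y, 0 < pdx (pdy S) (x, y) := hpos
  have hsplit := mul_eq_of_cross hm hpos' (cross_of_area hS harea)
  have hF : ∀ x, HasDerivAt (fun x => pdy S (x, 0)) (pdx (pdy S) (x, 0)) x :=
    fun x => pdx_hasDerivAt (contDiff_pdy hS) x 0
  have hG : ∀ y, HasDerivAt (fun y => pdx S (0, y) / pdx (pdy S) (0, 0))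
      (pdx (pdy S) (0, y) / pdx (pdy S) (0, 0)) y := fun y => by
    have h := (pdy_hasDerivAt (contDiff_pdx hS) 0 y).div_const (pdx (pdy S) (0, 0))
    rwa [pdy_pdx_comm hS] at h
  have hFc : ContDiff ℝ (⊤ : ℕ∞) (fun x : ℝ => pdy S (x, 0)) :=
    (contDiff_pdy hS).comp (contDiff_id.prodMk contDiff_const)
  have hGc : ContDiff ℝ (⊤ : ℕ∞) (fun y : ℝ => pdx S (0, y) / pdx (pdy S) (0, 0)) :=
    ((contDiff_pdx hS).comp (contDiff_const.prodMk contDiff_id)).div_const _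
  have hFm : StrictMono (fun x : ℝ => pdy S (x, 0)) :=
    strictMono_of_deriv_pos fun x => (hF x).deriv ▸ hpos' x 0
  have hGm : StrictMono (fun y : ℝ => pdx S (0, y) / pdx (pdy S) (0, 0)) :=
    strictMono_of_deriv_pos fun y => (hG y).deriv ▸ div_pos (hpos' 0 y) (hpos' 0 0)
  refine ⟨_, _, hFc, hGc, hFm, hGm, hFm.injective.prodMap hGm.injective,
    (hFc.comp contDiff_fst).prodMk (hGc.comp contDiff_snd), fun x y => ?_⟩
  rw [det_fderiv_prod (hF x) (hG y), Sxy, ← mul_div_assoc, ← hsplit x y,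
    mul_div_cancel_right₀ _ (hpos' 0 0).ne']
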